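/- arXiv:1704.07677 — 3 statements merged into one kernel-verified Lean document; each statement's English description precedes it below -/
import Mathlib

section
/- Let A be a modal formula and let t be a translation for A based on a sequence Q of atoms not occurring in A. If GL ⊢ A^t, then K4 ⊢ A. -/
/-! ### Modal formulas -/

inductive MF : Type
  | atom : ℕ → MF
  | bot  : MF
  | and  : MF → MF → MF
  | or   : MF → MF → MF
  | imp  : MF → MF → MF
  | neg  : MF → MF
  | box  : MF → MF
  deriving DecidableEq

namespace MF

/-- The set of atoms occurring in a modal formula. -/
def atoms : MF → Set ℕ
  | atom n => {n}
  | bot => ∅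
  | and A B => atoms A ∪ atoms B
  | or A B => atoms A ∪ atoms B
  | imp A B => atoms A ∪ atoms B
  | neg A => atoms A
  | box A => atoms A

/-- A boolean valuation on modal formulas respecting the classical connectives
(boxed formulas and atoms are treated as arbitrary). -/
def Respects (v : MF → Bool) : Prop :=
  v bot = false ∧
  (∀ A B, v (and A B) = (v A && v B)) ∧
  (∀ A B, v (or A B) = (v A || v B)) ∧
  (∀ A B, v (imp A B) = (!(v A) || v B)) ∧
  (∀ A, v (neg A) = !(v A))

/-- Classical propositional tautology (in the modal language). -/
def IsTaut (A : MF) : Prop := ∀ v, Respects v → v A = true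

end MF

/-- Hilbert-style provability in the normal modal logic `K` extended by the
axiom scheme `Ax`: classical tautologies, scheme K, the extra axioms,
modus ponens and necessitation. -/
inductive Prv (Ax : MF → Prop) : MF → Prop
  | taut {A : MF} : MF.IsTaut A → Prv Ax A
  | axK {A B : MF} : Prv Ax ((MF.box (A.imp B)).imp ((MF.box A).imp (MF.box B)))
  | extra {A : MF} : Ax A → Prv Ax A
  | mp {A B : MF} : Prv Ax (A.imp B) → Prv Ax A → Prv Ax B
  | nec {A : MF} : Prv Ax A → Prv Ax A.box

/-- Scheme 4 : □A → □□A. -/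
def Ax4 (A : MF) : Prop := ∃ B, A = (MF.box B).imp (MF.box (MF.box B))
/-- Scheme T : □A → A. -/
def AxT (A : MF) : Prop := ∃ B, A = (MF.box B).imp B
/-- Scheme D : ¬□⊥. -/
def AxD (A : MF) : Prop := A = MF.neg (MF.box MF.bot)
/-- Löb's scheme L : □(□A→A) → □A. -/
def AxGL (A : MF) : Prop := ∃ B, A = (MF.box ((MF.box B).imp B)).imp (MF.box B)

def AxK4  : MF → Prop := Ax4
def AxKD4 : MF → Prop := fun A => Ax4 A ∨ AxD A
def AxS4  : MF → Prop := fun A => Ax4 A ∨ AxT A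

def PrvK   : MF → Prop := Prv (fun _ => False)
def PrvK4  : MF → Prop := Prv AxK4
def PrvKD4 : MF → Prop := Prv AxKD4
def PrvS4  : MF → Prop := Prv AxS4
def PrvGL  : MF → Prop := Prv AxGL

/-- Conjunction of a finite list of modal formulas (empty conjunction is ⊤ := ⊥→⊥). -/
def conjL (l : List MF) : MF := l.foldr MF.and (MF.imp MF.bot MF.bot)

/-- `ModalConseq Ax Γ A` : there are B₁,…,Bₙ ∈ Γ with ⊢ (B₁∧…∧Bₙ)→A in K + Ax. -/
def ModalConseq (Ax : MF → Prop) (Γ : Set MF) (A : MF) : Prop :=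
  ∃ l : List MF, (∀ B ∈ l, B ∈ Γ) ∧ Prv Ax ((conjL l).imp A)

/-! ### Annotated modal formulas and translations -/

/-- Modal formulas with every occurrence of □ annotated by a natural number. -/
inductive AMF : Type
  | atom : ℕ → AMF
  | bot  : AMF
  | and  : AMF → AMF → AMF
  | or   : AMF → AMF → AMF
  | imp  : AMF → AMF → AMF
  | neg  : AMF → AMF
  | box  : ℕ → AMF → AMF

namespace AMF

/-- Forget the annotations. -/
def erase : AMF → MF
  | atom n => .atom n
  | bot => .bot
  | and A B => .and (erase A) (erase B)
  | or A B => .or (erase A) (erase B)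
  | imp A B => .imp (erase A) (erase B)
  | neg A => .neg (erase A)
  | box _ A => .box (erase A)

/-- The list of all annotations occurring in an annotated formula. -/
def labels : AMF → List ℕ
  | atom _ => []
  | bot => []
  | and A B => labels A ++ labels B
  | or A B => labels A ++ labels B
  | imp A B => labels A ++ labels B
  | neg A => labels A
  | box n A => n :: labels A

/-- A translation is ordered when the number assigned to each box is strictly
greater than all numbers assigned to boxes in its scope. -/
def Ordered : AMF → Prop
  | atom _ => True
  | bot => True
  | and A B => Ordered A ∧ Ordered B
  | or A B => Ordered A ∧ Ordered B
  | imp A B => Ordered A ∧ Ordered B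
  | neg A => Ordered A
  | box n A => Ordered A ∧ ∀ m ∈ labels A, m < n

end AMF

/-- `conjQ q n` is the conjunction q₀ ∧ … ∧ q_n of the atoms `q i`. -/
def conjQ (q : ℕ → ℕ) : ℕ → MF
  | 0 => .atom (q 0)
  | n+1 => (conjQ q n).and (.atom (q (n+1)))

/-- The formula `A^t`: commutes with connectives and `(□B)^t = □(q₀∧…∧q_n → B^t)`
where `n` is the annotation on that box. -/
def AMF.trans (q : ℕ → ℕ) : AMF → MF
  | .atom n => .atom n
  | .bot => .bot
  | .and A B => (trans q A).and (trans q B)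
  | .or A B => (trans q A).or (trans q B)
  | .imp A B => (trans q A).imp (trans q B)
  | .neg A => (trans q A).neg
  | .box n A => .box ((conjQ q n).imp (trans q A))

/-! ### Kripke semantics -/

/-- Classical Kripke forcing for modal formulas. -/
def Forces {W : Type} (R : W → W → Prop) (V : ℕ → W → Prop) : W → MF → Prop
  | w, .atom n => V n w
  | _, .bot => False
  | w, .and A B => Forces R V w A ∧ Forces R V w B
  | w, .or A B => Forces R V w A ∨ Forces R V w B
  | w, .imp A B => Forces R V w A → Forces R V w B
  | w, .neg A => ¬ Forces R V w A
  | w, .box A => ∀ u, R w u → Forces R V u A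

/-- Cluster equivalence: `x = y`, or `x R y` and `y R x`. -/
def ClusterEq {W : Type} (R : W → W → Prop) (x y : W) : Prop :=
  x = y ∨ (R x y ∧ R y x)

/-- A transitive frame whose clusters form a tree and in which every cluster is
a single irreflexive point or a nonempty set of reflexive points. -/
structure TreeWithClusters {W : Type} (R : W → W → Prop) : Prop where
  trans : Transitive R
  rooted : ∃ r, ∀ x, ClusterEq R r x ∨ R r x
  treelike : ∀ x y z, R x z → R y z → (ClusterEq R x y ∨ R x y ∨ R y x)
  cluster_irrefl_singleton : ∀ x, ¬ R x x → ∀ y, ClusterEq R x y → y = x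
  cluster_homog : ∀ x y, ClusterEq R x y → (R x x → R y y)

/-! ### Expansions -/

/-- `Expansion A B` : `B ∈ E(A)`, the set of expansions of `A`. -/
inductive Expansion : MF → MF → Prop
  | atom (n) : Expansion (.atom n) (.atom n)
  | bot : Expansion .bot .bot
  | and {A B D E : MF} : Expansion A D → Expansion B E → Expansion (A.and B) (D.and E)
  | or {A B D E : MF} : Expansion A D → Expansion B E → Expansion (A.or B) (D.or E)
  | imp {A B D E : MF} : Expansion A D → Expansion B E → Expansion (A.imp B) (D.imp E)
  | neg {A D : MF} : Expansion A D → Expansion A.neg D.neg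
  | box {A D : MF} (l : List MF) : Expansion A D → (∀ E ∈ l, Expansion A E) →
      Expansion A.box (MF.box (l.foldr MF.or D))

/-! ### Propositional formulas and Visser-style natural deduction -/

inductive PF : Type
  | atom : ℕ → PF
  | bot  : PF
  | and  : PF → PF → PF
  | or   : PF → PF → PF
  | imp  : PF → PF → PF
  deriving DecidableEq

def PF.top : PF := .imp .bot .bot
def PF.neg (A : PF) : PF := A.imp .bot

/-- Natural deduction derivability from a set of assumptions.  `ef` switches
the ex falso rule on/off; `Rule` is an additional rule given as a relation
between a list of premises and a conclusion.  The base system (with `ef`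
and no extra rule) is Visser's BPC: ∧/∨ intro and elim, →I (discharging),
ex falso, and the formalized rules; no modus ponens. -/
inductive Deriv (ef : Prop) (Rule : List PF → PF → Prop) : Set PF → PF → Prop
  | hyp {Γ : Set PF} {A : PF} : A ∈ Γ → Deriv ef Rule Γ A
  | andI {Γ : Set PF} {A B : PF} : Deriv ef Rule Γ A → Deriv ef Rule Γ B → Deriv ef Rule Γ (A.and B)
  | andE1 {Γ : Set PF} {A B : PF} : Deriv ef Rule Γ (A.and B) → Deriv ef Rule Γ A
  | andE2 {Γ : Set PF} {A B : PF} : Deriv ef Rule Γ (A.and B) → Deriv ef Rule Γ B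
  | orI1 {Γ : Set PF} {A B : PF} : Deriv ef Rule Γ A → Deriv ef Rule Γ (A.or B)
  | orI2 {Γ : Set PF} {A B : PF} : Deriv ef Rule Γ B → Deriv ef Rule Γ (A.or B)
  | orE {Γ : Set PF} {A B C : PF} : Deriv ef Rule Γ (A.or B) → Deriv ef Rule (insert A Γ) C →
      Deriv ef Rule (insert B Γ) C → Deriv ef Rule Γ C
  | impI {Γ : Set PF} {A B : PF} : Deriv ef Rule (insert A Γ) B → Deriv ef Rule Γ (A.imp B)
  | exfalso {Γ : Set PF} {A : PF} : ef → Deriv ef Rule Γ .bot → Deriv ef Rule Γ A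
  | fAndI {Γ : Set PF} {A B C : PF} : Deriv ef Rule Γ (A.imp B) → Deriv ef Rule Γ (A.imp C) →
      Deriv ef Rule Γ (A.imp (B.and C))
  | fOrE {Γ : Set PF} {A B C : PF} : Deriv ef Rule Γ (A.imp C) → Deriv ef Rule Γ (B.imp C) →
      Deriv ef Rule Γ ((A.or B).imp C)
  | fTr {Γ : Set PF} {A B C : PF} : Deriv ef Rule Γ (A.imp B) → Deriv ef Rule Γ (B.imp C) →
      Deriv ef Rule Γ (A.imp C)
  | extra {Γ : Set PF} {ps : List PF} {c : PF} : Rule ps c → (∀ p ∈ ps, Deriv ef Rule Γ p) → Deriv ef Rule Γ c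

/-- No extra rule. -/
def RuleNone : List PF → PF → Prop := fun _ _ => False
/-- Rule C : from A and ¬A infer ⊥. -/
def RuleC : List PF → PF → Prop := fun ps c => ∃ A : PF, ps = [A, A.neg] ∧ c = .bot
/-- Rule R (modus ponens) : from A and A→B infer B. -/
def RuleR : List PF → PF → Prop := fun ps c => ∃ A B : PF, ps = [A, A.imp B] ∧ c = B
/-- Löb's rule L : from (A∧(A→B))→B infer A→B. -/
def RuleL : List PF → PF → Prop :=
  fun ps c => ∃ A B : PF, ps = [(A.and (A.imp B)).imp B] ∧ c = A.imp B
/-- Rule C' : from ⊤→⊥ infer ⊥. -/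
def RuleC' : List PF → PF → Prop := fun ps c => ps = [PF.top.imp .bot] ∧ c = .bot
/-- Rule R' : from ⊤→A infer A. -/
def RuleR' : List PF → PF → Prop := fun ps c => ∃ A : PF, ps = [PF.top.imp A] ∧ c = A
/-- Rule L' : from (⊤→A)→A infer ⊤→A. -/
def RuleL' : List PF → PF → Prop :=
  fun ps c => ∃ A : PF, ps = [(PF.top.imp A).imp A] ∧ c = PF.top.imp A

def BPC  : Set PF → PF → Prop := Deriv True RuleNone
def EBPC : Set PF → PF → Prop := Deriv True RuleC
def IPC  : Set PF → PF → Prop := Deriv True RuleR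
def FPL  : Set PF → PF → Prop := Deriv True RuleL
def MPC  : Set PF → PF → Prop := Deriv False RuleR

/-! ### BHK translations -/

/-- The BHK translation `b`. -/
def bhk : PF → MF
  | .atom n => .box (.atom n)
  | .bot => .box .bot
  | .and A B => (bhk A).and (bhk B)
  | .or A B => (bhk A).or (bhk B)
  | .imp A B => .box ((bhk A).imp (bhk B))

/-- The weak BHK translation `w`.  The propositional atom `n` is embedded as
the modal atom `n+1`, and the fresh atom `q` (not in the propositional
language) is the modal atom `0`; `⊥^w = □q`. -/
def wtr : PF → MF
  | .atom n => .box (.atom (n+1))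
  | .bot => .box (.atom 0)
  | .and A B => (wtr A).and (wtr B)
  | .or A B => (wtr A).or (wtr B)
  | .imp A B => .box ((wtr A).imp (wtr B))

/-! ### The cut-free sequent calculus G(KD4) -/

/-- Cut-free derivability in the sequent calculus G(KD4): axioms,
structural rules (weakening, contraction, exchange), two-sided rules for
∧, ∨, →, ¬, and the modal rules □₄R and □_D R. -/
inductive GKD4 : List MF → List MF → Prop
  | ax (A) : GKD4 [A] [A]
  | axBot : GKD4 [.bot] []
  | exL {Γ Γ' Δ : List MF} : GKD4 Γ Δ → Γ.Perm Γ' → GKD4 Γ' Δ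
  | exR {Γ Δ Δ' : List MF} : GKD4 Γ Δ → Δ.Perm Δ' → GKD4 Γ Δ'
  | wL {Γ Δ : List MF} (A : MF) : GKD4 Γ Δ → GKD4 (A :: Γ) Δ
  | wR {Γ Δ : List MF} (A : MF) : GKD4 Γ Δ → GKD4 Γ (A :: Δ)
  | cL {Γ Δ : List MF} {A : MF} : GKD4 (A :: A :: Γ) Δ → GKD4 (A :: Γ) Δ
  | cR {Γ Δ : List MF} {A : MF} : GKD4 Γ (A :: A :: Δ) → GKD4 Γ (A :: Δ)
  | andL1 {Γ Δ : List MF} {A B : MF} : GKD4 (A :: Γ) Δ → GKD4 (A.and B :: Γ) Δ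
  | andL2 {Γ Δ : List MF} {A B : MF} : GKD4 (B :: Γ) Δ → GKD4 (A.and B :: Γ) Δ
  | andR {Γ₀ Δ₀ Γ₁ Δ₁ : List MF} {A B : MF} : GKD4 Γ₀ (A :: Δ₀) → GKD4 Γ₁ (B :: Δ₁) →
      GKD4 (Γ₀ ++ Γ₁) (A.and B :: (Δ₀ ++ Δ₁))
  | orL {Γ₀ Δ₀ Γ₁ Δ₁ : List MF} {A B : MF} : GKD4 (A :: Γ₀) Δ₀ → GKD4 (B :: Γ₁) Δ₁ →
      GKD4 (A.or B :: (Γ₀ ++ Γ₁)) (Δ₀ ++ Δ₁)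
  | orR1 {Γ Δ : List MF} {A B : MF} : GKD4 Γ (A :: Δ) → GKD4 Γ (A.or B :: Δ)
  | orR2 {Γ Δ : List MF} {A B : MF} : GKD4 Γ (B :: Δ) → GKD4 Γ (A.or B :: Δ)
  | impL {Γ₀ Δ₀ Γ₁ Δ₁ : List MF} {A B : MF} : GKD4 Γ₀ (A :: Δ₀) → GKD4 (B :: Γ₁) Δ₁ →
      GKD4 (A.imp B :: (Γ₀ ++ Γ₁)) (Δ₀ ++ Δ₁)
  | impR {Γ Δ : List MF} {A B : MF} : GKD4 (A :: Γ) (B :: Δ) → GKD4 Γ (A.imp B :: Δ)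
  | negL {Γ Δ : List MF} {A : MF} : GKD4 Γ (A :: Δ) → GKD4 (A.neg :: Γ) Δ
  | negR {Γ Δ : List MF} {A : MF} : GKD4 (A :: Γ) Δ → GKD4 Γ (A.neg :: Δ)
  | box4R {Γ : List MF} {A : MF} : GKD4 (Γ ++ Γ.map MF.box) [A] → GKD4 (Γ.map MF.box) [MF.box A]
  | boxDR {Γ : List MF} : GKD4 (Γ ++ Γ.map MF.box) [] → GKD4 (Γ.map MF.box) []

/-- Disjunction of a finite list of propositional formulas (empty: ⊥). -/
def disjL : List PF → PF
  | [] => .bot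
  | [A] => A
  | A :: B :: r => A.or (disjL (B :: r))

/-! ### Kripke semantics for MPC -/

/-- Intuitionistic (minimal) forcing, where `⊥` has its own upward-closed
valuation `Vbot`. -/
def MForces {W : Type} (le : W → W → Prop) (V : ℕ → W → Prop) (Vbot : W → Prop) :
    W → PF → Prop
  | w, .atom n => V n w
  | w, .bot => Vbot w
  | w, .and A B => MForces le V Vbot w A ∧ MForces le V Vbot w B
  | w, .or A B => MForces le V Vbot w A ∨ MForces le V Vbot w B
  | w, .imp A B => ∀ u, le w u → MForces le V Vbot u A → MForces le V Vbot u B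

/-- The S4 valuation induced by an MPC valuation: the fresh atom `q` (modal
atom 0) gets `V(⊥)`, and the propositional atom `n` (modal atom `n+1`) gets `V(n)`. -/
def shiftVal {W : Type} (V : ℕ → W → Prop) (Vbot : W → Prop) : ℕ → W → Prop
  | 0 => Vbot
  | n+1 => V n

/-!
Read a formula at level `k` by interpreting `□A` as the conjunction of the `□Aᵢ` over `i < k`,
where `Aᵢ` is `A` read at level `i`. Semantically this replaces a transitive frame by its product
with `(ℕ, >)`. Since levels strictly decrease along the product relation, Löb's axiom becomes
provable in K4, by induction on the level; hence every theorem of GL is provable in K4 at every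
level. Let `qᵢ` be true exactly at the levels `k ≥ i`. Then `q₀ ∧ … ∧ qₙ → B` is only a constraint at
levels `≥ n`, and when `k > n` the level `n` itself is among those the box ranges over. Because the
labels strictly increase outwards, `(□B)^t` read at any level above its labels is therefore
equivalent to `□B`, and so `A^t` is equivalent to `A` at a high enough level.
-/

namespace Prv

variable {Ax : MF → Prop} {A B C : MF} {l : List MF}

theorem imp_refl : Prv Ax (A.imp A) :=
  taut fun v hv => by grind [MF.Respects]

theorem imp_of (h : Prv Ax B) : Prv Ax (A.imp B) :=
  mp (taut fun v hv => by grind [MF.Respects]) h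

theorem imp_trans (hAB : Prv Ax (A.imp B)) (hBC : Prv Ax (B.imp C)) : Prv Ax (A.imp C) :=
  have h : Prv Ax ((A.imp B).imp ((B.imp C).imp (A.imp C))) :=
    taut fun v hv => by grind [MF.Respects]
  mp (mp h hAB) hBC

theorem imp_mp (hAB : Prv Ax (C.imp (A.imp B))) (hA : Prv Ax (C.imp A)) : Prv Ax (C.imp B) :=
  have h : Prv Ax ((C.imp (A.imp B)).imp ((C.imp A).imp (C.imp B))) :=
    taut fun v hv => by grind [MF.Respects]
  mp (mp h hAB) hA

theorem imp_and (hA : Prv Ax (C.imp A)) (hB : Prv Ax (C.imp B)) : Prv Ax (C.imp (A.and B)) :=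
  have h : Prv Ax (A.imp (B.imp (A.and B))) := taut fun v hv => by grind [MF.Respects]
  imp_mp (imp_trans hA h) hB

theorem and_imp_left : Prv Ax ((A.and B).imp A) :=
  taut fun v hv => by grind [MF.Respects]

theorem and_imp_right : Prv Ax ((A.and B).imp B) :=
  taut fun v hv => by grind [MF.Respects]

theorem curry (h : Prv Ax ((A.and B).imp C)) : Prv Ax (A.imp (B.imp C)) :=
  mp (taut fun v hv => by grind [MF.Respects]) h

theorem box_mono (h : Prv Ax (A.imp B)) : Prv Ax (A.box.imp B.box) :=
  mp axK (nec h)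

theorem imp_box_mp (hAB : Prv Ax (C.imp (A.imp B).box)) (hA : Prv Ax (C.imp A.box)) :
    Prv Ax (C.imp B.box) :=
  imp_mp (imp_trans hAB axK) hA

theorem imp_box_and (hA : Prv Ax (C.imp A.box)) (hB : Prv Ax (C.imp B.box)) :
    Prv Ax (C.imp (A.and B).box) :=
  imp_box_mp (imp_trans hA (box_mono (curry imp_refl))) hB

theorem conjL_imp (hA : A ∈ l) : Prv Ax ((conjL l).imp A) := by
  induction l with
  | nil => cases hA
  | cons B l ih =>
    rcases List.mem_cons.1 hA with rfl | hA
    · exact and_imp_left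
    · exact imp_trans and_imp_right (ih hA)

theorem imp_conjL (h : ∀ A ∈ l, Prv Ax (C.imp A)) : Prv Ax (C.imp (conjL l)) := by
  induction l with
  | nil => exact imp_of imp_refl
  | cons A l ih =>
    exact imp_and (h A List.mem_cons_self) (ih fun B hB => h B (List.mem_cons_of_mem A hB))

theorem imp_box_conjL (h : ∀ A ∈ l, Prv Ax (C.imp A.box)) : Prv Ax (C.imp (conjL l).box) := by
  induction l with
  | nil => exact imp_of (nec imp_refl)
  | cons A l ih =>
    exact imp_box_and (h A List.mem_cons_self) (ih fun B hB => h B (List.mem_cons_of_mem A hB))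

end Prv

/-- Provable equivalence in K + `Ax`, as a pair of provable implications. -/
def PrvEquiv (Ax : MF → Prop) (A B : MF) : Prop :=
  Prv Ax (A.imp B) ∧ Prv Ax (B.imp A)

namespace PrvEquiv

variable {Ax : MF → Prop} {A A' B B' : MF}

theorem refl (A : MF) : PrvEquiv Ax A A :=
  ⟨Prv.imp_refl, Prv.imp_refl⟩

theorem and (hA : PrvEquiv Ax A A') (hB : PrvEquiv Ax B B') :
    PrvEquiv Ax (A.and B) (A'.and B') :=
  ⟨.imp_and (.imp_trans .and_imp_left hA.1) (.imp_trans .and_imp_right hB.1),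
    .imp_and (.imp_trans .and_imp_left hA.2) (.imp_trans .and_imp_right hB.2)⟩

theorem or (hA : PrvEquiv Ax A A') (hB : PrvEquiv Ax B B') :
    PrvEquiv Ax (A.or B) (A'.or B') :=
  have or_mono {C C' D D' : MF} (hC : Prv Ax (C.imp C')) (hD : Prv Ax (D.imp D')) :
      Prv Ax ((C.or D).imp (C'.or D')) :=
    have h : Prv Ax ((C.imp C').imp ((D.imp D').imp ((C.or D).imp (C'.or D')))) :=
      .taut fun v hv => by grind [MF.Respects]
    .mp (.mp h hC) hD
  ⟨or_mono hA.1 hB.1, or_mono hA.2 hB.2⟩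

theorem imp (hA : PrvEquiv Ax A A') (hB : PrvEquiv Ax B B') :
    PrvEquiv Ax (A.imp B) (A'.imp B') :=
  have imp_mono {C C' D D' : MF} (hC : Prv Ax (C'.imp C)) (hD : Prv Ax (D.imp D')) :
      Prv Ax ((C.imp D).imp (C'.imp D')) :=
    .curry (.imp_trans (.imp_mp .and_imp_left (.imp_trans .and_imp_right hC)) hD)
  ⟨imp_mono hA.2 hB.1, imp_mono hA.1 hB.2⟩

theorem neg (hA : PrvEquiv Ax A A') : PrvEquiv Ax A.neg A'.neg :=
  have neg_mono {C C' : MF} (hC : Prv Ax (C'.imp C)) : Prv Ax (C.neg.imp C'.neg) :=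
    .mp (.taut fun v hv => by grind [MF.Respects]) hC
  ⟨neg_mono hA.2, neg_mono hA.1⟩

end PrvEquiv

/-- The conjunction `□(f 0) ∧ … ∧ □(f (k - 1))`: a box read at level `k`, where `f i` is its body
read at level `i`. For `k = 0` it is `⊤`. -/
def boxBelow (f : ℕ → MF) (k : ℕ) : MF :=
  conjL ((List.range k).map fun i => (f i).box)

section boxBelow

variable {Ax : MF → Prop} {f : ℕ → MF} {A C : MF} {i k n : ℕ}

theorem boxBelow_imp_box (hi : i < k) : Prv Ax ((boxBelow f k).imp (f i).box) :=
  .conjL_imp (List.mem_map.2 ⟨i, List.mem_range.2 hi, rfl⟩)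

theorem imp_boxBelow (h : ∀ i < k, Prv Ax (C.imp (f i).box)) : Prv Ax (C.imp (boxBelow f k)) :=
  .imp_conjL <| List.forall_mem_map.2 fun i hi => h i (List.mem_range.1 hi)

theorem boxBelow_of_forall (h : ∀ i < k, Prv Ax (f i)) : Prv Ax (boxBelow f k) :=
  .mp (imp_boxBelow (C := MF.bot.imp MF.bot) fun i hi => .imp_of (.nec (h i hi))) .imp_refl

theorem boxBelow_imp_distrib (f g : ℕ → MF) (k : ℕ) :
    Prv Ax ((boxBelow (fun i => (f i).imp (g i)) k).imp ((boxBelow f k).imp (boxBelow g k))) :=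
  .curry <| imp_boxBelow fun _ hi =>
    .imp_box_mp (.imp_trans .and_imp_left (boxBelow_imp_box hi))
      (.imp_trans .and_imp_right (boxBelow_imp_box hi))

theorem boxBelow_imp_box_boxBelow (h4 : ∀ A : MF, Prv Ax (A.box.imp A.box.box))
    (f : ℕ → MF) (k : ℕ) : Prv Ax ((boxBelow f k).imp (boxBelow f k).box) :=
  .imp_box_conjL <| List.forall_mem_map.2 fun i hi =>
    .imp_trans (boxBelow_imp_box (List.mem_range.1 hi)) (h4 (f i))

theorem boxBelow_loeb (h4 : ∀ A : MF, Prv Ax (A.box.imp A.box.box)) (f : ℕ → MF) (k : ℕ) :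
    Prv Ax ((boxBelow (fun i => (boxBelow f i).imp (f i)) k).imp (boxBelow f k)) := by
  refine imp_boxBelow fun i => ?_
  induction i using Nat.strong_induction_on with
  | _ i ih =>
    intro hi
    have h_below := imp_boxBelow fun j hj => ih j hj (hj.trans hi)
    exact .imp_box_mp (boxBelow_imp_box hi)
      (.imp_trans h_below (boxBelow_imp_box_boxBelow h4 f i))

theorem boxBelow_equiv_box (hn : n < k) (h_imp : Prv Ax ((f n).imp A))
    (h_of : ∀ i < k, Prv Ax (A.imp (f i))) : PrvEquiv Ax (boxBelow f k) A.box :=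
  ⟨.imp_trans (boxBelow_imp_box hn) (.box_mono h_imp),
    imp_boxBelow fun i hi => .box_mono (h_of i hi)⟩

end boxBelow

/-- `A.atLevel σ k` is the reading of `A` at level `k`: a box quantifies over the levels below `k`,
and `σ i a` is the formula substituted for the atom `a` at level `i`. -/
def MF.atLevel (σ : ℕ → ℕ → MF) : MF → ℕ → MF
  | atom a, k => σ k a
  | bot, _ => bot
  | and A B, k => (A.atLevel σ k).and (B.atLevel σ k)
  | or A B, k => (A.atLevel σ k).or (B.atLevel σ k)
  | imp A B, k => (A.atLevel σ k).imp (B.atLevel σ k)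
  | neg A, k => (A.atLevel σ k).neg
  | box A, k => boxBelow (A.atLevel σ) k

theorem MF.IsTaut.atLevel {A : MF} (hA : A.IsTaut) (σ : ℕ → ℕ → MF) (k : ℕ) :
    (A.atLevel σ k).IsTaut := by
  rintro v ⟨hbot, hand, hor, himp, hneg⟩
  exact hA (fun B => v (B.atLevel σ k))
    ⟨hbot, fun _ _ => hand _ _, fun _ _ => hor _ _, fun _ _ => himp _ _, fun _ => hneg _⟩

theorem PrvGL.atLevel {Ax : MF → Prop} (h4 : ∀ A : MF, Prv Ax (A.box.imp A.box.box)) {A : MF}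
    (hA : PrvGL A) (σ : ℕ → ℕ → MF) (k : ℕ) : Prv Ax (A.atLevel σ k) := by
  unfold PrvGL at hA
  induction hA generalizing k with
  | taut hA => exact .taut (hA.atLevel σ k)
  | axK => exact boxBelow_imp_distrib _ _ k
  | extra hA =>
    obtain ⟨B, rfl⟩ := hA
    exact boxBelow_loeb h4 _ k
  | mp _ _ ihAB ihA => exact .mp (ihAB k) (ihA k)
  | nec _ ih => exact boxBelow_of_forall fun i _ => ih i

open Classical in
/-- For injective `q`, the substitution at level `k` making `q i` true (`⊥ → ⊥`) when `i ≤ k` and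
false otherwise; atoms outside the range of `q` are unchanged. -/
noncomputable def thresholdSubst (q : ℕ → ℕ) (k a : ℕ) : MF :=
  if a ∈ q '' Set.Iic k then MF.bot.imp MF.bot else if a ∈ Set.range q then MF.bot else MF.atom a

section thresholdSubst

variable {Ax : MF → Prop} {q : ℕ → ℕ} {a k n : ℕ}

theorem thresholdSubst_of_le (hn : n ≤ k) : thresholdSubst q k (q n) = MF.bot.imp MF.bot :=
  if_pos ⟨n, hn, rfl⟩

theorem thresholdSubst_of_lt (hq : Function.Injective q) (hk : k < n) :
    thresholdSubst q k (q n) = MF.bot := by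
  simp [thresholdSubst, hq.eq_iff, hk]

theorem thresholdSubst_of_notMem_range (ha : a ∉ Set.range q) :
    thresholdSubst q k a = MF.atom a := by
  rw [thresholdSubst, if_neg fun h => ha (Set.image_subset_range q _ h), if_neg ha]

theorem conjQ_atLevel_of_le (hn : n ≤ k) :
    Prv Ax ((conjQ q n).atLevel (thresholdSubst q) k) := by
  have h_atom {m : ℕ} (hm : m ≤ k) : Prv Ax (thresholdSubst q k (q m)) := by
    rw [thresholdSubst_of_le hm]
    exact .imp_refl
  induction n with
  | zero => exact h_atom hn
  | succ n ih => exact .mp (.mp (.curry .imp_refl) (ih (Nat.le_of_succ_le hn))) (h_atom hn)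

theorem conjQ_atLevel_imp_bot_of_lt (hq : Function.Injective q) (hk : k < n) :
    Prv Ax (((conjQ q n).atLevel (thresholdSubst q) k).imp MF.bot) := by
  cases n with
  | zero => exact absurd hk k.not_lt_zero
  | succ n =>
    rw [← thresholdSubst_of_lt hq hk]
    exact .and_imp_right

end thresholdSubst

theorem box_conjQ_imp_atLevel_equiv_box {Ax : MF → Prop} {q : ℕ → ℕ} (hq : Function.Injective q)
    {A B : MF} {n k : ℕ} (hn : n < k)
    (h : ∀ i ≥ n, PrvEquiv Ax (B.atLevel (thresholdSubst q) i) A) :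
    PrvEquiv Ax (((conjQ q n).imp B).box.atLevel (thresholdSubst q) k) A.box := by
  refine boxBelow_equiv_box hn ?_ fun i _ => ?_
  · have h_conj : Prv Ax ((conjQ q n).atLevel (thresholdSubst q) n) := conjQ_atLevel_of_le le_rfl
    exact .imp_trans (.imp_mp .imp_refl (.imp_of h_conj)) (h n le_rfl).1
  · rcases le_or_gt n i with hi | hi
    · exact .curry (.imp_trans .and_imp_left (h i hi).2)
    · have exfalso : Prv Ax (MF.bot.imp (B.atLevel (thresholdSubst q) i)) :=
        .taut fun v hv => by grind [MF.Respects]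
      exact .imp_of (.imp_trans (conjQ_atLevel_imp_bot_of_lt hq hi) exfalso)

theorem AMF.trans_atLevel_equiv_erase {Ax : MF → Prop} {q : ℕ → ℕ} (hq : Function.Injective q)
    {t : AMF} (hfresh : ∀ i, q i ∉ t.erase.atoms) (hord : t.Ordered) {k : ℕ}
    (hk : ∀ m ∈ t.labels, m < k) :
    PrvEquiv Ax ((t.trans q).atLevel (thresholdSubst q) k) t.erase := by
  induction t generalizing k with
  | atom a =>
    have ha : a ∉ Set.range q := fun ⟨i, hi⟩ => hfresh i hi
    simpa only [trans, MF.atLevel, erase, thresholdSubst_of_notMem_range ha] using .refl _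
  | bot => exact .refl _
  | and A B ihA ihB =>
    have ⟨hkA, hkB⟩ := List.forall_mem_append.1 hk
    exact (ihA (fun i hi => hfresh i (.inl hi)) hord.1 hkA).and
      (ihB (fun i hi => hfresh i (.inr hi)) hord.2 hkB)
  | or A B ihA ihB =>
    have ⟨hkA, hkB⟩ := List.forall_mem_append.1 hk
    exact (ihA (fun i hi => hfresh i (.inl hi)) hord.1 hkA).or
      (ihB (fun i hi => hfresh i (.inr hi)) hord.2 hkB)
  | imp A B ihA ihB =>
    have ⟨hkA, hkB⟩ := List.forall_mem_append.1 hk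
    exact (ihA (fun i hi => hfresh i (.inl hi)) hord.1 hkA).imp
      (ihB (fun i hi => hfresh i (.inr hi)) hord.2 hkB)
  | neg A ih => exact (ih hfresh hord hk).neg
  | box n A ih =>
    exact box_conjQ_imp_atLevel_equiv_box hq (hk n List.mem_cons_self) fun i hi =>
      ih hfresh hord.1 fun m hm => (hord.2 m hm).trans_le hi

-- STATEMENT 0
theorem stmt0 (A : MF) (t : AMF) (q : ℕ → ℕ)
    (hinj : Function.Injective q)
    (hfresh : ∀ i, q i ∉ A.atoms)
    (herase : t.erase = A)
    (hord : t.Ordered)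
    (hGL : PrvGL (t.trans q)) :
    PrvK4 A := by
  subst herase
  obtain ⟨k, hk⟩ : ∃ k, ∀ m ∈ t.labels, m < k :=
    ⟨t.labels.sum + 1, fun m hm => Nat.lt_succ_of_le (List.le_sum_of_mem hm)⟩
  have h_level : PrvK4 ((t.trans q).atLevel (thresholdSubst q) k) :=
    hGL.atLevel (fun _ => .extra ⟨_, rfl⟩) _ k
  exact .mp (AMF.trans_atLevel_equiv_erase hinj hfresh hord hk).1 h_level
end

section
/- Let (K, R, V) be a finite transitive Kripke tree with clusters, A a modal formula, and t a translation for A. Then there is a finite transitive irreflexive Kripke model (K', R', V') such that for every node k ∈ K with k ⊨ A there is a node k' ∈ K' with k' ⊨ A^t. -/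
/-!
Every node `k` is replaced by copies `(k, 0), …, (k, N)`, where a step inside a cluster has to lower
the level and a step to a later cluster may choose any level; this makes the frame irreflexive and
keeps it transitive. The atom `q m` is made true exactly at the levels `≥ m`. A box annotated `n`,
read as a box relativised to `q₀ ∧ … ∧ q_n`, then only looks at levels `≥ n`. Seen from a level
above `n` it reaches a copy of every successor in the original model, at level `n` if nothing else,
and since the boxes in its scope have annotations below `n`, the same reasoning applies to them
there.
-/

/-- The levelled copy of a frame in which clusters are unwound: a step follows `R`, and has to lower
the level if it stays inside a cluster. -/
def UnwindRel {W ι : Type*} [LT ι] (R : W → W → Prop) (x y : W × ι) : Prop :=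
  R x.1 y.1 ∧ (R y.1 x.1 → y.2 < x.2)

/-- The valuation on the levelled copy of a model that makes the atom `q m` true from level `m`
upwards and gives every atom outside the range of `q` its original value. -/
def UnwindVal {W : Type*} {N : ℕ} (V : ℕ → W → Prop) (q : ℕ → ℕ) (p : ℕ) (x : W × Fin N) : Prop :=
  (∃ m, q m = p ∧ m ≤ x.2.val) ∨ (p ∉ Set.range q ∧ V p x.1)

section UnwindRel

variable {W ι : Type*} [Preorder ι] {R : W → W → Prop}

instance unwindRel_irrefl : Std.Irrefl (UnwindRel (ι := ι) R) where
  irrefl _ h := lt_irrefl _ (h.2 h.1)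

instance unwindRel_isTrans [IsTrans W R] : IsTrans (W × ι) (UnwindRel R) where
  trans x y z hxy hyz := by
    refine ⟨_root_.trans hxy.1 hyz.1, fun hzx => ?_⟩
    have hzy : z.2 < y.2 := hyz.2 (_root_.trans hzx hxy.1)
    have hyx : y.2 < x.2 := hxy.2 (_root_.trans hyz.1 hzx)
    exact hzy.trans hyx

end UnwindRel

theorem forces_conjQ {W : Type} (R : W → W → Prop) (V : ℕ → W → Prop) (q : ℕ → ℕ) (w : W) (n : ℕ) :
    Forces R V w (conjQ q n) ↔ ∀ m ≤ n, V (q m) w := by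
  induction n with
  | zero => simp only [conjQ, Forces, Nat.le_zero, forall_eq]
  | succ n ih => simp only [conjQ, Forces, ih, Nat.le_succ_iff, or_imp, forall_and, forall_eq]

section UnwindVal

variable {W : Type*} {N : ℕ} {V : ℕ → W → Prop} {q : ℕ → ℕ}

theorem unwindVal_apply (hq : Function.Injective q) (m : ℕ) (x : W × Fin N) :
    UnwindVal V q (q m) x ↔ m ≤ x.2.val := by
  simp only [UnwindVal, hq.eq_iff, exists_eq_left, Set.mem_range_self, not_true_eq_false,
    false_and, or_false]

theorem unwindVal_of_notMem_range {p : ℕ} (hp : p ∉ Set.range q) (x : W × Fin N) :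
    UnwindVal V q p x ↔ V p x.1 := by
  have hne : ∀ m, q m ≠ p := fun m hm => hp ⟨m, hm⟩
  simp only [UnwindVal, hne, hp, false_and, exists_false, false_or, not_false_eq_true, true_and]

end UnwindVal

section Truth

variable {W : Type} {N : ℕ} {R : W → W → Prop} {V : ℕ → W → Prop} {q : ℕ → ℕ}

theorem forces_conjQ_unwindVal (S : W × Fin N → W × Fin N → Prop) (hq : Function.Injective q)
    (x : W × Fin N) (n : ℕ) : Forces S (UnwindVal V q) x (conjQ q n) ↔ n ≤ x.2.val := by
  simp only [forces_conjQ, unwindVal_apply hq]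
  exact ⟨fun h => h n le_rfl, fun h m hm => hm.trans h⟩

theorem forces_relativized_box_iff (hq : Function.Injective q) {B C : MF} {n : ℕ}
    (hBC : ∀ (l : W) (j : Fin N), n ≤ j.val →
      (Forces (UnwindRel R) (UnwindVal V q) (l, j) B ↔ Forces R V l C))
    (k : W) {i : Fin N} (hn : n < i.val) :
    Forces (UnwindRel R) (UnwindVal V q) (k, i) (((conjQ q n).imp B).box) ↔
      Forces R V k C.box := by
  simp only [Forces, forces_conjQ_unwindVal _ hq]
  constructor
  · intro h l hkl
    let j : Fin N := ⟨n, hn.trans i.isLt⟩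
    have hstep : UnwindRel R (k, i) (l, j) := ⟨hkl, fun _ => hn⟩
    exact (hBC l j le_rfl).1 (h (l, j) hstep le_rfl)
  · rintro h ⟨l, j⟩ hstep hj
    exact (hBC l j hj).2 (h l hstep.1)

theorem forces_trans_iff_forces_erase (hq : Function.Injective q) {t : AMF}
    (hfresh : ∀ m, q m ∉ t.erase.atoms) (hord : t.Ordered) (k : W) {i : Fin N}
    (hi : ∀ m ∈ t.labels, m < i.val) :
    Forces (UnwindRel R) (UnwindVal V q) (k, i) (t.trans q) ↔ Forces R V k t.erase := by
  induction t generalizing k i with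
  | atom p =>
    have hp : p ∉ Set.range q := fun ⟨m, hm⟩ => hfresh m hm
    exact unwindVal_of_notMem_range hp (k, i)
  | bot => exact Iff.rfl
  | neg A ih => exact not_congr (ih hfresh hord k hi)
  | and A B ihA ihB | or A B ihA ihB | imp A B ihA ihB =>
    simp only [AMF.erase, MF.atoms, Set.mem_union, not_or, forall_and] at hfresh
    simp only [AMF.labels, List.mem_append, or_imp, forall_and] at hi
    simp only [AMF.trans, AMF.erase, Forces, ihA hfresh.1 hord.1 k hi.1,
      ihB hfresh.2 hord.2 k hi.2]
  | box n A ih =>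
    have hn : n < i.val := hi n List.mem_cons_self
    exact forces_relativized_box_iff hq
      (fun l _ hj => ih hfresh hord.1 l fun m hm => (hord.2 m hm).trans_le hj) k hn

end Truth

theorem stmt1_general {W : Type} [Finite W] (R : W → W → Prop) [IsTrans W R] (V : ℕ → W → Prop)
    {t : AMF} {q : ℕ → ℕ} (hinj : Function.Injective q) (hfresh : ∀ i, q i ∉ t.erase.atoms)
    (hord : t.Ordered) :
    ∃ (W' : Type) (_ : Finite W') (R' : W' → W' → Prop) (V' : ℕ → W' → Prop) (f : W → W'),
      IsTrans W' R' ∧ Std.Irrefl R' ∧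
      ∀ k, Forces R' V' (f k) (t.trans q) ↔ Forces R V k t.erase := by
  obtain ⟨N, hN⟩ : ∃ N, ∀ m ∈ t.labels, m < N :=
    ⟨t.labels.sum + 1, fun m hm => Nat.lt_succ_of_le (List.le_sum_of_mem hm)⟩
  exact ⟨W × Fin (N + 1), inferInstance, UnwindRel R, UnwindVal V q, fun k => (k, Fin.last N),
    inferInstance, inferInstance, fun k => forces_trans_iff_forces_erase hinj hfresh hord k hN⟩

-- STATEMENT 1
theorem stmt1 {W : Type} [Fintype W] (R : W → W → Prop) (V : ℕ → W → Prop)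
    (hR : TreeWithClusters R)
    (A : MF) (t : AMF) (q : ℕ → ℕ)
    (hinj : Function.Injective q)
    (hfresh : ∀ i, q i ∉ A.atoms)
    (herase : t.erase = A)
    (hord : t.Ordered) :
    ∃ (W' : Type) (_ : Fintype W') (R' : W' → W' → Prop) (V' : ℕ → W' → Prop),
      Transitive R' ∧ Irreflexive R' ∧
      ∀ k : W, Forces R V k A → ∃ k' : W', Forces R' V' k' (t.trans q) := by
  subst herase
  have : IsTrans W R := ⟨fun _ _ _ hxy hyz => hR.trans hxy hyz⟩
  obtain ⟨W', _, R', V', f, hR'trans, hR'irrefl, hf⟩ := stmt1_general R V hinj hfresh hord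
  exact ⟨W', Fintype.ofFinite W', R', V', fun _ _ _ => hR'trans.trans _ _ _, hR'irrefl.irrefl,
    fun k hk => ⟨f k, (hf k).2 hk⟩⟩
end

section
/- For every set Γ of propositional formulas and every propositional formula A: Γ ⊢_BPC A if and only if Γ^b ⊢_K4 A^b. -/
/-!
Soundness: K4 proves `A^b → □A^b` and `□⊥ → A^b` for every translated formula. The former
lets the box be introduced in the translation of `→I`, the latter gives ex falso, and each of the
other rules is an instance of propositional reasoning, possibly under a box.

Faithfulness: BPC is complete for transitive persistent Kripke models. Its canonical worlds are
the consistent prime theories; `S` sees `T` when `S ⊆ T` and, for all `A → B ∈ S`, `A ∈ T` implies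
`B ∈ T`. The formalized rules say exactly that `{(A, B) | A → B ∈ S}` is a distributive lattice
preorder, so the prime ideal theorem supplies the worlds that refute implications. Such a model need
not be reflexive, whereas `p^b` is `□p`; hence we attach to each world a dead end with the same
atoms. Dead ends force every translated formula, so they do not affect implications, but they make
`□p` at a world reflect `p` there, and refute `□⊥` there.
-/

theorem MF.Respects.conjL_eq_true_iff {v : MF → Bool} (hv : MF.Respects v) (l : List MF) :
    v (conjL l) = true ↔ ∀ B ∈ l, v B = true := by
  obtain ⟨hbot, hand, -, himp, -⟩ := hv
  induction l with
  | nil => simp [conjL, himp, hbot]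
  | cons B l ih =>
    change v (B.and (conjL l)) = true ↔ _
    simp [hand, ih]

theorem MF.Respects.imp_eq_true_iff {v : MF → Bool} (hv : MF.Respects v) (A B : MF) :
    v (A.imp B) = true ↔ (v A = true → v B = true) := by
  rw [hv.2.2.2.1]
  cases v A <;> simp

theorem Prv.tautological_consequence {Ax : MF → Prop} {A B : MF} (hA : Prv Ax A)
    (h : ∀ v, MF.Respects v → v A = true → v B = true) : Prv Ax B :=
  .mp (.taut fun v hv => (hv.imp_eq_true_iff A B).2 (h v hv)) hA

theorem Prv.tautological_consequence₂ {Ax : MF → Prop} {A B C : MF} (hA : Prv Ax A)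
    (hB : Prv Ax B) (h : ∀ v, MF.Respects v → v A = true → v B = true → v C = true) :
    Prv Ax C :=
  .mp (hA.tautological_consequence fun v hv hvA => (hv.imp_eq_true_iff B C).2 (h v hv hvA)) hB

namespace ModalConseq

variable {Ax : MF → Prop} {Γ Δ : Set MF} {A B C : MF}

theorem of_prv (h : Prv Ax A) : ModalConseq Ax Γ A :=
  ⟨[], by simp, h.tautological_consequence fun v hv hA =>
    (hv.imp_eq_true_iff _ _).2 fun _ => hA⟩

theorem of_isTaut (h : MF.IsTaut A) : ModalConseq Ax Γ A := of_prv (.taut h)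

theorem hyp (h : A ∈ Γ) : ModalConseq Ax Γ A :=
  ⟨[A], by simpa using h, .taut fun v hv => by
    simp [hv.imp_eq_true_iff, hv.conjL_eq_true_iff]⟩

theorem mp (hAB : ModalConseq Ax Γ (A.imp B)) (hA : ModalConseq Ax Γ A) :
    ModalConseq Ax Γ B := by
  obtain ⟨l, hl, hlAB⟩ := hAB
  obtain ⟨m, hm, hmA⟩ := hA
  refine ⟨l ++ m, fun D hD => (List.mem_append.1 hD).elim (hl D) (hm D), ?_⟩
  refine hlAB.tautological_consequence₂ hmA fun v hv => ?_
  simp only [hv.imp_eq_true_iff, hv.conjL_eq_true_iff, List.mem_append]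
  exact fun hlAB hmA hlm =>
    hlAB (fun D hD => hlm D (.inl hD)) (hmA fun D hD => hlm D (.inr hD))

theorem imp_intro (h : ModalConseq Ax (insert A Γ) B) : ModalConseq Ax Γ (A.imp B) := by
  obtain ⟨l, hl, hlB⟩ := h
  refine ⟨l.filter (· ≠ A), fun C hC => ?_, ?_⟩
  · obtain ⟨hCl, hCA⟩ : C ∈ l ∧ C ≠ A := by simpa using hC
    exact (hl C hCl).resolve_left hCA
  · refine hlB.tautological_consequence fun v hv hlB => ?_
    simp only [hv.imp_eq_true_iff, hv.conjL_eq_true_iff, List.mem_filter,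
      decide_eq_true_eq] at hlB ⊢
    intro hfilter hA
    refine hlB fun C hCl => ?_
    obtain rfl | hCA := eq_or_ne C A
    · exact hA
    · exact hfilter C ⟨hCl, hCA⟩

theorem and_intro (hA : ModalConseq Ax Γ A) (hB : ModalConseq Ax Γ B) :
    ModalConseq Ax Γ (A.and B) :=
  ((of_isTaut (by grind [MF.IsTaut, MF.Respects])).mp hA).mp hB

theorem and_left (h : ModalConseq Ax Γ (A.and B)) : ModalConseq Ax Γ A :=
  (of_isTaut (by grind [MF.IsTaut, MF.Respects])).mp h

theorem and_right (h : ModalConseq Ax Γ (A.and B)) : ModalConseq Ax Γ B :=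
  (of_isTaut (by grind [MF.IsTaut, MF.Respects])).mp h

theorem or_inl (h : ModalConseq Ax Γ A) : ModalConseq Ax Γ (A.or B) :=
  (of_isTaut (by grind [MF.IsTaut, MF.Respects])).mp h

theorem or_inr (h : ModalConseq Ax Γ B) : ModalConseq Ax Γ (A.or B) :=
  (of_isTaut (by grind [MF.IsTaut, MF.Respects])).mp h

theorem or_elim (h : ModalConseq Ax Γ (A.or B)) (hA : ModalConseq Ax (insert A Γ) C)
    (hB : ModalConseq Ax (insert B Γ) C) : ModalConseq Ax Γ C :=
  (((of_isTaut (by grind [MF.IsTaut, MF.Respects])).mp h).mp hA.imp_intro).mp hB.imp_intro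

theorem bot_elim (h : ModalConseq Ax Γ .bot) : ModalConseq Ax Γ A :=
  (of_isTaut (by grind [MF.IsTaut, MF.Respects])).mp h

theorem box_mp (hAB : ModalConseq Ax Γ (A.imp B).box) (hA : ModalConseq Ax Γ A.box) :
    ModalConseq Ax Γ B.box :=
  ((of_prv .axK).mp hAB).mp hA

theorem box_conjL {l : List MF} (h : ∀ B ∈ l, ModalConseq Ax Γ B.box) :
    ModalConseq Ax Γ (conjL l).box := by
  induction l with
  | nil => exact of_prv (.nec (.taut fun v hv => by simp [hv.conjL_eq_true_iff]))
  | cons B l ih =>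
    have hpair : Prv Ax (B.imp ((conjL l).imp (B.and (conjL l)))) :=
      .taut (by grind [MF.IsTaut, MF.Respects])
    have hB : ModalConseq Ax Γ B.box := h B List.mem_cons_self
    have hl : ModalConseq Ax Γ (conjL l).box := ih fun C hC => h C (List.mem_cons_of_mem B hC)
    exact ((of_prv hpair.nec).box_mp hB).box_mp hl

theorem box_of_forall_box (hA : ModalConseq Ax Δ A) (hΔ : ∀ B ∈ Δ, ModalConseq Ax Γ B.box) :
    ModalConseq Ax Γ A.box := by
  obtain ⟨l, hl, hlA⟩ := hA
  exact (of_prv hlA.nec).box_mp (box_conjL fun B hB => hΔ B (hl B hB))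

theorem box_mono (hAB : ModalConseq Ax {A} B) (hA : ModalConseq Ax Γ A.box) :
    ModalConseq Ax Γ B.box :=
  hAB.box_of_forall_box (by simpa using hA)

theorem box_mono₂ (hABC : ModalConseq Ax {A, B} C) (hA : ModalConseq Ax Γ A.box)
    (hB : ModalConseq Ax Γ B.box) : ModalConseq Ax Γ C.box :=
  hABC.box_of_forall_box (by simpa using ⟨hA, hB⟩)

theorem box_bhk (four : ∀ C : MF, Prv Ax (C.box.imp C.box.box)) {A : PF} :
    ∀ {Γ : Set MF}, ModalConseq Ax Γ (bhk A) → ModalConseq Ax Γ (bhk A).box := by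
  induction A with
  | atom n => exact (of_prv (four _)).mp
  | bot => exact (of_prv (four _)).mp
  | imp A B => exact (of_prv (four _)).mp
  | and A B ihA ihB =>
    exact fun h => box_mono₂ (and_intro (hyp (by simp)) (hyp (by simp)))
      (ihA h.and_left) (ihB h.and_right)
  | or A B ihA ihB =>
    exact fun h => or_elim h (box_mono (or_inl (hyp rfl)) (ihA (hyp (Set.mem_insert _ _))))
      (box_mono (or_inr (hyp rfl)) (ihB (hyp (Set.mem_insert _ _))))

theorem bhk_of_box_bot (h : ModalConseq Ax Γ (MF.box .bot)) (A : PF) :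
    ModalConseq Ax Γ (bhk A) := by
  have box_any (B : MF) : ModalConseq Ax Γ B.box := box_mono (bot_elim (hyp rfl)) h
  induction A with
  | atom n => exact box_any _
  | bot => exact box_any _
  | imp A B => exact box_any _
  | and A B ihA ihB => exact and_intro ihA ihB
  | or A B ihA _ => exact or_inl ihA

end ModalConseq

open ModalConseq in
theorem BPC.modalConseq_bhk {Ax : MF → Prop} (four : ∀ C : MF, Prv Ax (C.box.imp C.box.box))
    {Γ : Set PF} {A : PF} (h : BPC Γ A) : ModalConseq Ax (bhk '' Γ) (bhk A) := by
  unfold BPC at h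
  induction h with
  | hyp h => exact hyp (Set.mem_image_of_mem bhk h)
  | andI _ _ ihA ihB => exact and_intro ihA ihB
  | andE1 _ ih => exact and_left ih
  | andE2 _ ih => exact and_right ih
  | orI1 _ ih => exact or_inl ih
  | orI2 _ ih => exact or_inr ih
  | orE _ _ _ ih ihA ihB =>
    rw [Set.image_insert_eq] at ihA ihB
    exact or_elim ih ihA ihB
  | impI _ ih =>
    rw [Set.image_insert_eq] at ih
    exact box_of_forall_box (imp_intro ih) (Set.forall_mem_image.2 fun B hB =>
      box_bhk four (hyp (Set.mem_image_of_mem bhk hB)))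
  | exfalso _ _ ih => exact bhk_of_box_bot ih _
  | fAndI _ _ ihB ihC =>
    refine box_mono₂ (imp_intro (and_intro ?_ ?_)) ihB ihC
    all_goals exact mp (hyp (by simp)) (hyp (Set.mem_insert _ _))
  | fOrE _ _ ihA ihB =>
    refine box_mono₂ (imp_intro (or_elim (hyp (Set.mem_insert _ _)) ?_ ?_)) ihA ihB
    all_goals exact mp (hyp (by simp)) (hyp (Set.mem_insert _ _))
  | @fTr _ A B C _ _ ihAB ihBC =>
    refine box_mono₂ (imp_intro (mp (A := bhk B) (hyp (by simp)) ?_)) ihAB ihBC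
    exact mp (hyp (by simp)) (hyp (Set.mem_insert _ _))
  | extra h => exact h.elim

section Kripke

variable {W : Type} {R : W → W → Prop} {V : ℕ → W → Prop} {Ax : MF → Prop}

open Classical in
theorem respects_decide_forces (R : W → W → Prop) (V : ℕ → W → Prop) (w : W) :
    MF.Respects fun A => decide (Forces R V w A) := by
  grind [MF.Respects, Forces]

theorem Prv.forces (hAx : ∀ A, Ax A → ∀ w, Forces R V w A) {A : MF} (h : Prv Ax A) (w : W) :
    Forces R V w A := by
  induction h generalizing w with
  | taut h => simpa using h _ (respects_decide_forces R V w)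
  | axK => exact fun hAB hA u hu => hAB u hu (hA u hu)
  | extra h => exact hAx _ h w
  | mp _ _ ihAB ihA => exact ihAB w (ihA w)
  | nec _ ih => exact fun u _ => ih u

theorem forces_conjL_iff {w : W} {l : List MF} :
    Forces R V w (conjL l) ↔ ∀ B ∈ l, Forces R V w B := by
  simpa using (respects_decide_forces R V w).conjL_eq_true_iff l

theorem ModalConseq.forces (hAx : ∀ A, Ax A → ∀ w, Forces R V w A) {Γ : Set MF} {A : MF}
    (h : ModalConseq Ax Γ A) {w : W} (hΓ : ∀ B ∈ Γ, Forces R V w B) : Forces R V w A := by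
  obtain ⟨l, hl, hlA⟩ := h
  exact hlA.forces hAx w (forces_conjL_iff.2 fun B hB => hΓ B (hl B hB))

theorem Ax4.forces [IsTrans W R] {A : MF} (h : Ax4 A) (w : W) : Forces R V w A := by
  obtain ⟨B, rfl⟩ := h
  exact fun hB u hwu x hux => hB x (_root_.trans hwu hux)

/-- The accessibility relation obtained from `R` by attaching to every world `w`, now written
`Sum.inl w`, a dead-end copy `Sum.inr w`, seen from `w` and from whatever sees `w`. -/
inductive TwinRel (R : W → W → Prop) : W ⊕ W → W ⊕ W → Prop
  | live {w u : W} : R w u → TwinRel R (.inl w) (.inl u)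
  | dead {w u : W} : Relation.ReflGen R w u → TwinRel R (.inl w) (.inr u)

instance [IsTrans W R] : IsTrans (W ⊕ W) (TwinRel R) where
  trans := by
    rintro _ _ _ (hwu | _) (hux | (_ | hux))
    · exact .live (_root_.trans hwu hux)
    · exact .dead (.single hwu)
    · exact .dead (.single (_root_.trans hwu hux))

/-- The valuation giving a world and its dead-end copy the same atoms. -/
def twinVal (V : ℕ → W → Prop) (n : ℕ) : W ⊕ W → Prop := Sum.elim (V n) (V n)

theorem forces_bhk_inr (w : W) (A : PF) :
    Forces (TwinRel R) (twinVal V) (.inr w) (bhk A) := by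
  have box_any (B : MF) : Forces (TwinRel R) (twinVal V) (.inr w) B.box := nofun
  induction A with
  | atom n => exact box_any _
  | bot => exact box_any _
  | imp A B => exact box_any _
  | and A B ihA ihB => exact ⟨ihA, ihB⟩
  | or A B ihA _ => exact .inl ihA

theorem forces_bhk_inl_iff (hV : ∀ n w u, R w u → V n w → V n u) {A : PF} {w : W} :
    Forces (TwinRel R) (twinVal V) (.inl w) (bhk A) ↔ MForces R V (fun _ => False) w A := by
  induction A generalizing w with
  | atom n =>
    refine ⟨fun h => h (.inr w) (.dead .refl), ?_⟩
    rintro h _ (hwu | (_ | hwu))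
    · exact hV n _ _ hwu h
    · exact h
    · exact hV n _ _ hwu h
  | bot => exact ⟨fun h => h (.inr w) (.dead .refl), False.elim⟩
  | and A B ihA ihB => exact and_congr ihA ihB
  | or A B ihA ihB => exact or_congr ihA ihB
  | imp A B ihA ihB =>
    constructor
    · exact fun h u hwu hA => ihB.1 (h (.inl u) (.live hwu) (ihA.2 hA))
    · rintro h _ (hwu | _) hA
      · exact ihB.2 (h _ hwu (ihA.1 hA))
      · exact forces_bhk_inr _ B

end Kripke

namespace Deriv

variable {ef : Prop} {Rule : List PF → PF → Prop} {Γ Δ : Set PF} {A B : PF}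

theorem weaken (h : Deriv ef Rule Γ A) (hΓΔ : Γ ⊆ Δ) : Deriv ef Rule Δ A := by
  induction h generalizing Δ with
  | hyp h => exact .hyp (hΓΔ h)
  | andI _ _ ihA ihB => exact .andI (ihA hΓΔ) (ihB hΓΔ)
  | andE1 _ ih => exact .andE1 (ih hΓΔ)
  | andE2 _ ih => exact .andE2 (ih hΓΔ)
  | orI1 _ ih => exact .orI1 (ih hΓΔ)
  | orI2 _ ih => exact .orI2 (ih hΓΔ)
  | orE _ _ _ ih ihA ihB =>
    exact .orE (ih hΓΔ) (ihA (Set.insert_subset_insert hΓΔ)) (ihB (Set.insert_subset_insert hΓΔ))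
  | impI _ ih => exact .impI (ih (Set.insert_subset_insert hΓΔ))
  | exfalso hef _ ih => exact .exfalso hef (ih hΓΔ)
  | fAndI _ _ ihB ihC => exact .fAndI (ihB hΓΔ) (ihC hΓΔ)
  | fOrE _ _ ihA ihB => exact .fOrE (ihA hΓΔ) (ihB hΓΔ)
  | @fTr _ A B C _ _ ihAB ihBC => exact .fTr (ihAB hΓΔ) (ihBC hΓΔ)
  | extra hrule _ ih => exact .extra hrule fun p hp => ih p hp hΓΔ

theorem weaken_insert {C : PF} (h : Deriv ef Rule (insert A Γ) B) :
    Deriv ef Rule (insert A (insert C Γ)) B :=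
  h.weaken (Set.insert_subset_insert (Set.subset_insert C Γ))

theorem cut (hA : Deriv ef Rule Γ A) (hB : Deriv ef Rule (insert A Γ) B) : Deriv ef Rule Γ B :=
  .orE (.orI1 (B := A) hA) hB hB

theorem and_or_distrib {C : PF} (h : Deriv ef Rule Γ ((A.or B).and (A.or C))) :
    Deriv ef Rule Γ (A.or (B.and C)) := by
  refine .orE h.andE1 (.orI1 (.hyp (Set.mem_insert _ _))) ?_
  refine .orE (h.weaken (Set.subset_insert _ _)).andE2 (.orI1 (.hyp (Set.mem_insert _ _))) ?_
  exact .orI2 (.andI (.hyp (by simp)) (.hyp (Set.mem_insert _ _)))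

end Deriv

/-- A preorder on formulas that extends BPC entailment between single formulas and for which `∧` and
`∨` are still meet and join. Such preorders arise both from a set of assumptions and from the
implications contained in a theory. -/
structure LatticeEntailment where
  Rel : PF → PF → Prop
  of_bpc {A B : PF} : BPC {A} B → Rel A B
  trans {A B C : PF} : Rel A B → Rel B C → Rel A C
  and_intro {A B C : PF} : Rel A B → Rel A C → Rel A (B.and C)
  or_elim {A B C : PF} : Rel A C → Rel B C → Rel (A.or B) C

namespace LatticeEntailment

variable (E : LatticeEntailment)

/-- A copy of the type of formulas, carrying the preorder `E.Rel`. -/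
def Formula (_ : LatticeEntailment) : Type := PF

instance : Preorder E.Formula where
  le := E.Rel
  le_refl _ := E.of_bpc (.hyp rfl)
  le_trans _ _ _ := E.trans

/-- The Lindenbaum algebra of `E`: formulas modulo interderivability. -/
abbrev Lindenbaum : Type := Antisymmetrization E.Formula (· ≤ ·)

/-- The class of a formula in the Lindenbaum algebra. -/
def toLindenbaum (A : PF) : E.Lindenbaum := toAntisymmetrization (α := E.Formula) (· ≤ ·) A

theorem and_mono {A A' B B' : PF} (hA : E.Rel A A') (hB : E.Rel B B') :
    E.Rel (A.and B) (A'.and B') :=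
  E.and_intro (E.trans (E.of_bpc (.andE1 (.hyp rfl))) hA)
    (E.trans (E.of_bpc (.andE2 (.hyp rfl))) hB)

theorem or_mono {A A' B B' : PF} (hA : E.Rel A A') (hB : E.Rel B B') :
    E.Rel (A.or B) (A'.or B') :=
  E.or_elim (E.trans hA (E.of_bpc (.orI1 (.hyp rfl))))
    (E.trans hB (E.of_bpc (.orI2 (.hyp rfl))))

instance : DistribLattice E.Lindenbaum where
  inf := Quotient.map₂ PF.and fun _ _ hA _ _ hB =>
    ⟨E.and_mono hA.1 hB.1, E.and_mono hA.2 hB.2⟩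
  sup := Quotient.map₂ PF.or fun _ _ hA _ _ hB =>
    ⟨E.or_mono hA.1 hB.1, E.or_mono hA.2 hB.2⟩
  inf_le_left := by rintro ⟨A⟩ ⟨B⟩; exact E.of_bpc (.andE1 (.hyp rfl))
  inf_le_right := by rintro ⟨A⟩ ⟨B⟩; exact E.of_bpc (.andE2 (.hyp rfl))
  le_inf := by rintro ⟨A⟩ ⟨B⟩ ⟨C⟩; exact E.and_intro
  le_sup_left := by rintro ⟨A⟩ ⟨B⟩; exact E.of_bpc (.orI1 (.hyp rfl))
  le_sup_right := by rintro ⟨A⟩ ⟨B⟩; exact E.of_bpc (.orI2 (.hyp rfl))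
  sup_le := by rintro ⟨A⟩ ⟨B⟩ ⟨C⟩; exact E.or_elim
  le_sup_inf := by rintro ⟨A⟩ ⟨B⟩ ⟨C⟩; exact E.of_bpc (Deriv.and_or_distrib (.hyp rfl))

end LatticeEntailment

/-- Consistent prime theories of BPC, the worlds of the canonical model. Deductive closure is
expressed by closure under single-premise entailment and conjunction. -/
structure IsPrimeTheory (S : Set PF) : Prop where
  nonempty : S.Nonempty
  mem_of_bpc {A B : PF} : BPC {A} B → A ∈ S → B ∈ S
  and_mem {A B : PF} : A ∈ S → B ∈ S → A.and B ∈ S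
  mem_or_mem {A B : PF} : A.or B ∈ S → A ∈ S ∨ B ∈ S
  bot_notMem : PF.bot ∉ S

theorem LatticeEntailment.exists_isPrimeTheory (E : LatticeEntailment) {A B : PF}
    (h : ¬ E.Rel A B) :
    ∃ S, IsPrimeTheory S ∧ (∀ C D, E.Rel C D → C ∈ S → D ∈ S) ∧ A ∈ S ∧ B ∉ S := by
  have hdisj : Disjoint (Order.PFilter.principal (E.toLindenbaum A) : Set E.Lindenbaum)
      (Order.Ideal.principal (E.toLindenbaum B)) :=
    Set.disjoint_left.2 fun _ hA hB =>
      h (le_trans (Order.PFilter.mem_principal.1 hA) (Order.Ideal.mem_principal.1 hB))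
  obtain ⟨J, hJ, hBJ, hAJ⟩ := DistribLattice.prime_ideal_of_disjoint_filter_ideal hdisj
  have hB : E.toLindenbaum B ∈ J := Order.Ideal.principal_le_iff.1 hBJ
  have hA : E.toLindenbaum A ∉ J := Set.disjoint_left.1 hAJ (Order.PFilter.mem_principal.2 le_rfl)
  have hup (C D : PF) (hCD : E.Rel C D) (hC : E.toLindenbaum C ∉ J) : E.toLindenbaum D ∉ J :=
    fun hD => hC (J.lower hCD hD)
  refine ⟨{C | E.toLindenbaum C ∉ J}, ⟨⟨A, hA⟩, fun hCD => hup _ _ (E.of_bpc hCD), ?_, ?_, ?_⟩,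
    hup, hA, not_not.2 hB⟩
  · exact fun hC hD hCD => (hJ.mem_or_mem hCD).elim hC hD
  · exact fun hCD => not_and_or.1 fun ⟨hC, hD⟩ => hCD (Order.Ideal.sup_mem hC hD)
  · exact fun hbot => hup _ B (E.of_bpc (.exfalso trivial (.hyp rfl))) hbot hB

/-- Entailment in BPC under the additional assumptions `Γ`. -/
def LatticeEntailment.ofAssumptions (Γ : Set PF) : LatticeEntailment where
  Rel A B := BPC (insert A Γ) B
  of_bpc h := Deriv.weaken h (by simp)
  trans hAB hBC := Deriv.cut hAB (Deriv.weaken_insert hBC)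
  and_intro := .andI
  or_elim hA hB := .orE (.hyp (Set.mem_insert _ _)) (Deriv.weaken_insert hA)
    (Deriv.weaken_insert hB)

namespace IsPrimeTheory

variable {S : Set PF} {A B C : PF}

theorem mem_of_bpc_empty (hS : IsPrimeTheory S) (h : BPC ∅ A) : A ∈ S :=
  let ⟨_, hB⟩ := hS.nonempty
  hS.mem_of_bpc (Deriv.weaken h (Set.empty_subset _)) hB

theorem mem_of_bpc_pair (hS : IsPrimeTheory S) (h : BPC {A, B} C) (hA : A ∈ S)
    (hB : B ∈ S) : C ∈ S := by
  refine hS.mem_of_bpc (A := A.and B) ?_ (hS.and_mem hA hB)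
  have hAB : BPC {A.and B} (A.and B) := .hyp rfl
  exact Deriv.cut hAB.andE2 (Deriv.cut (Deriv.weaken hAB.andE1 (Set.subset_insert _ _))
    (Deriv.weaken h (by grind)))

theorem and_mem_iff (hS : IsPrimeTheory S) : A.and B ∈ S ↔ A ∈ S ∧ B ∈ S :=
  ⟨fun h => ⟨hS.mem_of_bpc (.andE1 (.hyp rfl)) h, hS.mem_of_bpc (.andE2 (.hyp rfl)) h⟩,
    fun h => hS.and_mem h.1 h.2⟩

theorem or_mem_iff (hS : IsPrimeTheory S) : A.or B ∈ S ↔ A ∈ S ∨ B ∈ S :=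
  ⟨hS.mem_or_mem,
    Or.rec (hS.mem_of_bpc (.orI1 (.hyp rfl))) (hS.mem_of_bpc (.orI2 (.hyp rfl)))⟩

/-- The implications belonging to a prime theory, read as an entailment relation; the formalized
rules of BPC provide the lattice laws. -/
def entailment (hS : IsPrimeTheory S) : LatticeEntailment where
  Rel A B := A.imp B ∈ S
  of_bpc h := hS.mem_of_bpc_empty (.impI (Deriv.weaken h (by simp)))
  trans {A B C} := hS.mem_of_bpc_pair (.fTr (B := B) (.hyp (by simp)) (.hyp (by simp)))
  and_intro := hS.mem_of_bpc_pair (.fAndI (.hyp (by simp)) (.hyp (by simp)))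
  or_elim := hS.mem_of_bpc_pair (.fOrE (.hyp (by simp)) (.hyp (by simp)))

end IsPrimeTheory

/-- Worlds of the canonical model of BPC. -/
abbrev CanonicalWorld : Type := {S : Set PF // IsPrimeTheory S}

/-- Accessibility in the canonical model. -/
def CanonicalRel (S T : CanonicalWorld) : Prop :=
  S.1 ⊆ T.1 ∧ ∀ A B, A.imp B ∈ S.1 → A ∈ T.1 → B ∈ T.1

/-- The valuation of the canonical model. -/
def canonicalVal (n : ℕ) (S : CanonicalWorld) : Prop := PF.atom n ∈ S.1

instance : IsTrans CanonicalWorld CanonicalRel where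
  trans _ _ _ hST hTU := ⟨hST.1.trans hTU.1, fun A B hAB => hTU.2 A B (hST.1 hAB)⟩

theorem exists_canonicalRel_of_imp_notMem {S : CanonicalWorld} {A B : PF} (h : A.imp B ∉ S.1) :
    ∃ T, CanonicalRel S T ∧ A ∈ T.1 ∧ B ∉ T.1 := by
  obtain ⟨T, hT, hup, hA, hB⟩ := S.2.entailment.exists_isPrimeTheory h
  refine ⟨⟨T, hT⟩, ⟨fun C hC => ?_, hup⟩, hA, hB⟩
  have hAC : A.imp C ∈ S.1 := S.2.mem_of_bpc (.impI (.hyp (by simp))) hC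
  exact hup A C hAC hA

theorem mforces_canonical_iff {A : PF} {S : CanonicalWorld} :
    MForces CanonicalRel canonicalVal (fun _ => False) S A ↔ A ∈ S.1 := by
  induction A generalizing S with
  | atom n => rfl
  | bot => exact (iff_false_intro S.2.bot_notMem).symm
  | and A B ihA ihB => exact (and_congr ihA ihB).trans S.2.and_mem_iff.symm
  | or A B ihA ihB => exact (or_congr ihA ihB).trans S.2.or_mem_iff.symm
  | imp A B ihA ihB =>
    constructor
    · intro h
      by_contra hAB
      obtain ⟨T, hST, hA, hB⟩ := exists_canonicalRel_of_imp_notMem hAB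
      exact hB (ihB.1 (h T hST (ihA.2 hA)))
    · exact fun hAB T hST hA => ihB.2 (hST.2 A B hAB (ihA.1 hA))

theorem exists_canonicalWorld_of_not_bpc {Γ : Set PF} {A : PF} (h : ¬ BPC Γ A) :
    ∃ S : CanonicalWorld, Γ ⊆ S.1 ∧ A ∉ S.1 := by
  have htop : ¬ BPC (insert PF.top Γ) A := fun hA =>
    h (Deriv.cut (.impI (.hyp (Set.mem_insert _ _))) hA)
  obtain ⟨S, hS, hup, htop, hA⟩ :=
    (LatticeEntailment.ofAssumptions Γ).exists_isPrimeTheory htop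
  exact ⟨⟨S, hS⟩, fun C hC => hup PF.top C (.hyp (Set.mem_insert_of_mem _ hC)) htop, hA⟩

theorem bpc_of_modalConseq_bhk {Γ : Set PF} {A : PF}
    (h : ModalConseq AxK4 (bhk '' Γ) (bhk A)) : BPC Γ A := by
  by_contra hA
  obtain ⟨S, hΓS, hAS⟩ := exists_canonicalWorld_of_not_bpc hA
  have forces_iff (C : PF) :
      Forces (TwinRel CanonicalRel) (twinVal canonicalVal) (.inl S) (bhk C) ↔ C ∈ S.1 :=
    (forces_bhk_inl_iff fun _ _ _ hTU hT => hTU.1 hT).trans mforces_canonical_iff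
  have hΓ : ∀ B ∈ bhk '' Γ,
      Forces (TwinRel CanonicalRel) (twinVal canonicalVal) (.inl S) B :=
    Set.forall_mem_image.2 fun C hC => (forces_iff C).2 (hΓS hC)
  exact hAS ((forces_iff A).1 (h.forces (fun _ => Ax4.forces) hΓ))

theorem stmt3 (Γ : Set PF) (A : PF) :
    BPC Γ A ↔ ModalConseq AxK4 (bhk '' Γ) (bhk A) := by
  exact ⟨BPC.modalConseq_bhk fun C => .extra ⟨C, rfl⟩, bpc_of_modalConseq_bhk⟩
end
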